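/- arXiv:2508.00294 — 6 statements merged into one kernel-verified Lean document; each statement's English description precedes it below -/
import Mathlib

section
/- Hölder's Theorem for ordered real vector spaces: let V be a totally ordered real vector space that is Archimedean, i.e., for all nonzero u, v ∈ V there exists n ∈ ℕ with |v| ≤ (n+1)·|u|, where |x| = max(x, −x). Then there exists an injective ℝ-linear map ψ : V → ℝ such that v ≤ w if and only if ψ(v) ≤ ψ(w) for all v, w ∈ V. -/
/-!
A totally ordered Archimedean group embeds into `ℝ` as an ordered group (Hölder's theorem for
groups), so the point is that a monotone additive map `f` is automatically homogeneous. For `v ≥ 0`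
the additive map `r ↦ f (r • v) - r • f v` vanishes at integers, so its value at `r` equals its
value at the fractional part of `r`. By monotonicity it is therefore bounded by `f v`, and a bounded
additive map into an Archimedean group is zero.
-/

section MonotoneAdditive

variable {W : Type*} [AddCommGroup W] [LinearOrder W] [IsOrderedAddMonoid W] [Archimedean W]

theorem addMonoidHom_eq_zero_of_abs_le {A : Type*} [AddMonoid A] (d : A →+ W) {b : W}
    (hd : ∀ x, |d x| ≤ b) : d = 0 := by
  ext x
  by_contra hx
  obtain ⟨n, hn⟩ := exists_lt_nsmul (abs_pos.2 hx) b
  refine (hd (n • x)).not_gt ?_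
  rwa [map_nsmul, abs_nsmul]

variable {K : Type*} [Ring K] [LinearOrder K] [IsStrictOrderedRing K] [FloorRing K]
  [Module K W] [SMulPosMono K W]

theorem orderAddMonoidHom_map_smul_of_nonneg {V : Type*} [AddCommGroup V] [Preorder V]
    [Module K V] [SMulPosMono K V] (f : V →+o W) (r : K) {v : V} (hv : 0 ≤ v) :
    f (r • v) = r • f v := by
  let d : K →+ W := (f : V →+ W).comp ((smulAddHom K V).flip v) - (smulAddHom K W).flip (f v)
  have d_apply (s : K) : d s = f (s • v) - s • f v := rfl
  have d_fract (s : K) : d (Int.fract s) = d s := by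
    have d_floor : d ⌊s⌋ = 0 := by
      rw [d_apply, Int.cast_smul_eq_zsmul, Int.cast_smul_eq_zsmul, map_zsmul, sub_self]
    rw [Int.fract, map_sub, d_floor, sub_zero]
  have hfv : 0 ≤ f v := map_nonneg f hv
  have d_bounded (s : K) : |d s| ≤ f v := by
    have fract_nonneg : 0 ≤ Int.fract s := Int.fract_nonneg s
    have fract_le_one : Int.fract s ≤ 1 := (Int.fract_lt_one s).le
    rw [← d_fract, d_apply]
    exact abs_sub_le_of_nonneg_of_le
      (map_nonneg f (smul_nonneg' fract_nonneg hv))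
      (OrderHomClass.mono f (smul_le_of_le_one_left hv fract_le_one))
      (smul_nonneg' fract_nonneg hfv)
      (smul_le_of_le_one_left hfv fract_le_one)
  have d_eq_zero : d r = 0 := DFunLike.congr_fun (addMonoidHom_eq_zero_of_abs_le d d_bounded) r
  rwa [d_apply, sub_eq_zero] at d_eq_zero

variable {V : Type*} [AddCommGroup V] [LinearOrder V] [IsOrderedAddMonoid V]
  [Module K V] [SMulPosMono K V]

theorem orderAddMonoidHom_map_smul (f : V →+o W) (r : K) (v : V) : f (r • v) = r • f v := by
  rcases le_total 0 v with hv | hv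
  · exact orderAddMonoidHom_map_smul_of_nonneg f r hv
  · have h := orderAddMonoidHom_map_smul_of_nonneg f r (neg_nonneg.2 hv)
    rwa [smul_neg, map_neg, map_neg, smul_neg, neg_inj] at h

variable (K V) in
theorem exists_strictMono_linearMap_real [Archimedean V] [Module K ℝ] [SMulPosMono K ℝ] :
    ∃ ψ : V →ₗ[K] ℝ, StrictMono ψ := by
  obtain ⟨f, hf⟩ := Archimedean.exists_orderAddMonoidHom_real_injective V
  exact ⟨{ toFun := f, map_add' := map_add f, map_smul' := orderAddMonoidHom_map_smul f },
    (OrderHomClass.mono f).strictMono_of_injective hf⟩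

end MonotoneAdditive

theorem archimedean_of_abs_le_nsmul {G : Type*} [AddCommGroup G] [LinearOrder G]
    [IsOrderedAddMonoid G] (h : ∀ u v : G, u ≠ 0 → v ≠ 0 → ∃ n : ℕ, |v| ≤ n • |u|) :
    Archimedean G where
  arch x y hy := by
    rcases eq_or_ne x 0 with rfl | hx
    · exact ⟨0, (zero_nsmul y).ge⟩
    · obtain ⟨n, hn⟩ := h y x hy.ne' hx
      rw [abs_of_pos hy] at hn
      exact ⟨n, (le_abs_self x).trans hn⟩

theorem holder_theorem_general {K : Type*} (V : Type*) [Ring K] [LinearOrder K]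
    [IsStrictOrderedRing K] [FloorRing K] [Module K ℝ] [SMulPosMono K ℝ]
    [AddCommGroup V] [Module K V] [LinearOrder V]
    (hcompat : ∀ α : K, 0 < α → ∀ x y z : V, x ≤ y → α • x + z ≤ α • y + z)
    (harch : ∀ u v : V, u ≠ 0 → v ≠ 0 →
      ∃ n : ℕ, max v (-v) ≤ ((n : K) + 1) • max u (-u)) :
    ∃ ψ : V →ₗ[K] ℝ, Function.Injective ψ ∧ ∀ v w : V, v ≤ w ↔ ψ v ≤ ψ w := by
  have : IsOrderedAddMonoid V :=
    { add_le_add_left := fun x y hxy z => by simpa using hcompat 1 one_pos x y z hxy }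
  have smul_nonneg_of_pos (α : K) (hα : 0 < α) (v : V) (hv : 0 ≤ v) : 0 ≤ α • v := by
    simpa using hcompat α hα 0 v 0 hv
  have : IsOrderedModule K V := .of_smul_nonneg fun α hα v hv => by
    rcases hα.eq_or_lt with rfl | hα
    · rw [zero_smul]
    · exact smul_nonneg_of_pos α hα v hv
  have : Archimedean V := archimedean_of_abs_le_nsmul fun u v hu hv => by
    obtain ⟨n, hn⟩ := harch u v hu hv
    refine ⟨n + 1, ?_⟩
    rwa [← Nat.cast_smul_eq_nsmul K, Nat.cast_succ]
  obtain ⟨ψ, hψ⟩ := exists_strictMono_linearMap_real K V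
  exact ⟨ψ, hψ.injective, fun v w => hψ.le_iff_le.symm⟩

/-- Hölder's Theorem for ordered real vector spaces: an Archimedean totally ordered real
vector space admits an injective order-reflecting `ℝ`-linear functional. -/
theorem holder_theorem (V : Type*) [AddCommGroup V] [Module ℝ V] [LinearOrder V]
    (hcompat : ∀ (α : ℝ), 0 < α → ∀ x y z : V, x ≤ y ↔ α • x + z ≤ α • y + z)
    (harch : ∀ u v : V, u ≠ 0 → v ≠ 0 →
      ∃ n : ℕ, max v (-v) ≤ ((n : ℝ) + 1) • max u (-u)) :
    ∃ ψ : V →ₗ[ℝ] ℝ, Function.Injective ψ ∧ ∀ v w : V, v ≤ w ↔ ψ v ≤ ψ w :=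
  holder_theorem_general V (fun α hα x y z => (hcompat α hα x y z).1) harch
end

section
/- Let Ω be a set and ≿ a total preorder on Ω (reflexive, transitive, and complete). Then there do not exist n ≥ 1, elements a₁,…,aₙ, b₁,…,bₙ ∈ Ω, and positive reals c₁,…,cₙ such that: (C1) aᵢ ≿ bᵢ for all i; (C2) Σᵢ cᵢ·1_{bᵢ}(ω) ≥ Σᵢ cᵢ·1_{aᵢ}(ω) for all ω ∈ Ω; and (C3|4) either bₖ ̸≿ aₖ for some k, or in addition to (C2) the two functions Σᵢ cᵢ·1_{bᵢ} and Σᵢ cᵢ·1_{aᵢ} are not equal. (In other words, the comparative expectation system of singleton-indicator gambles induced by ≿ is coherent with respect to weak dominance.) -/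
open Classical in
/-- The indicator gamble of a single state. -/
noncomputable def indicator1 {Ω : Type*} (a : Ω) : Ω → ℝ :=
  fun ω => if ω = a then 1 else 0

/-!
Put mass `c i` at `a i`, and compare with the same masses moved to `b i`. The total mass does not
change, so domination forces the two distributions to be equal. For a given `k`, let `U` be the
set of states equal to `a k` or preferred to it. Since `a i ≿ b i`, every index whose `b i` lies in
`U` has its `a i` in `U` too; as `U` carries equal, positive masses on both sides, the two sets of
indices agree, so `b k ∈ U`.
-/

section PointMasses

variable {ι Ω M : Type*} [AddCommMonoid M]

theorem degree_filter_sum_single [Fintype ι] (a : ι → Ω) (c : ι → M) (p : Ω → Prop)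
    [DecidablePred p] :
    ((∑ i, Finsupp.single (a i) (c i)).filter p).degree = ∑ i with p (a i), c i := by
  rw [Finsupp.filter_sum, map_sum, Finset.sum_filter]
  refine Finset.sum_congr rfl fun i _ => ?_
  split_ifs with h
  · rw [Finsupp.filter_single_of_pos p h, Finsupp.degree_single]
  · rw [Finsupp.filter_single_of_neg p h, map_zero]

variable [PartialOrder M] [IsOrderedCancelAddMonoid M]

theorem finsupp_degree_strictMono : StrictMono (Finsupp.degree : (Ω →₀ M) →+ M) := by
  classical
  intro f g hfg
  obtain ⟨hle, ω, hω⟩ := Finsupp.lt_def.1 hfg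
  have degree_f : f.degree = ∑ ω ∈ f.support ∪ g.support, f ω :=
    Finsupp.sum_of_support_subset f Finset.subset_union_left (fun _ => id) fun _ _ => rfl
  have degree_g : g.degree = ∑ ω ∈ f.support ∪ g.support, g ω :=
    Finsupp.sum_of_support_subset g Finset.subset_union_right (fun _ => id) fun _ _ => rfl
  have mem_support_union : ω ∈ f.support ∪ g.support := by
    by_contra hmem
    simp_all
  rw [degree_f, degree_g]
  exact Finset.sum_lt_sum (fun ω _ => hle ω) ⟨ω, mem_support_union, hω⟩

variable [Fintype ι] {a b : ι → Ω} {c : ι → M}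

theorem sum_single_eq_of_le
    (hle : ∑ i, Finsupp.single (a i) (c i) ≤ ∑ i, Finsupp.single (b i) (c i)) :
    ∑ i, Finsupp.single (a i) (c i) = ∑ i, Finsupp.single (b i) (c i) := by
  by_contra hne
  have degree_lt := finsupp_degree_strictMono (lt_of_le_of_ne hle hne)
  simp only [map_sum, Finsupp.degree_single, lt_irrefl] at degree_lt

theorem imp_of_sum_single_eq (hc : ∀ i, 0 < c i)
    (heq : ∑ i, Finsupp.single (a i) (c i) = ∑ i, Finsupp.single (b i) (c i))
    {p : Ω → Prop} (hp : ∀ i, p (b i) → p (a i)) {k : ι} (hk : p (a k)) : p (b k) := by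
  classical
  have mass_eq : ∑ i with p (b i), c i = ∑ i with p (a i), c i := by
    rw [← degree_filter_sum_single b c p, ← degree_filter_sum_single a c p, heq]
  by_contra hbk
  have mass_lt : ∑ i with p (b i), c i < ∑ i with p (a i), c i :=
    Finset.sum_lt_sum_of_subset (i := k) (Finset.monotone_filter_right _ fun i _ => hp i)
      (by simpa using hk) (by simpa using hbk) (hc k) fun i _ _ => (hc i).le
  exact mass_lt.ne mass_eq

theorem rel_of_sum_single_eq {r : Ω → Ω → Prop} [IsTrans Ω r] (hc : ∀ i, 0 < c i)
    (hab : ∀ i, r (a i) (b i))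
    (heq : ∑ i, Finsupp.single (a i) (c i) = ∑ i, Finsupp.single (b i) (c i)) (k : ι) :
    r (b k) (a k) := by
  have upper_closed (i : ι) (h : b i = a k ∨ r (b i) (a k)) : a i = a k ∨ r (a i) (a k) :=
    .inr <| h.elim (fun h => h ▸ hab i) (fun h => _root_.trans (hab i) h)
  have mem_upper : b k = a k ∨ r (b k) (a k) :=
    imp_of_sum_single_eq hc heq (p := fun ω => ω = a k ∨ r ω (a k)) upper_closed (.inl rfl)
  rcases mem_upper with h | h
  · simpa only [h] using hab k
  · exact h

end PointMasses

theorem sum_single_apply_eq_sum_mul_indicator1 {ι Ω : Type*} [Fintype ι] (a : ι → Ω) (c : ι → ℝ)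
    (ω : Ω) : (∑ i, Finsupp.single (a i) (c i)) ω = ∑ i, c i * indicator1 (a i) ω := by
  classical
  simp only [Finsupp.finsetSum_apply, Finsupp.single_apply, indicator1, mul_ite, mul_one, mul_zero,
    eq_comm]

theorem singleton_indicator_system_coherent_general {ι Ω : Type*} [Fintype ι]
    (pref : Ω → Ω → Prop) [IsTrans Ω pref] (a b : ι → Ω) (c : ι → ℝ) (hc : ∀ i, 0 < c i)
    (hab : ∀ i, pref (a i) (b i))
    (hle : ∀ ω, ∑ i, c i * indicator1 (a i) ω ≤ ∑ i, c i * indicator1 (b i) ω) :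
    (∀ i, pref (b i) (a i)) ∧
      ∀ ω, ∑ i, c i * indicator1 (b i) ω = ∑ i, c i * indicator1 (a i) ω := by
  simp only [← sum_single_apply_eq_sum_mul_indicator1] at hle ⊢
  have heq := sum_single_eq_of_le hle
  exact ⟨rel_of_sum_single_eq hc hab heq, fun ω => DFunLike.congr_fun heq.symm ω⟩

/-- The comparative expectation system of singleton-indicator gambles induced by a total
preorder is coherent with respect to weak dominance. -/
theorem singleton_indicator_system_coherent {Ω : Type*} (pref : Ω → Ω → Prop)
    (hrefl : ∀ a, pref a a)
    (htrans : ∀ a b c, pref a b → pref b c → pref a c)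
    (htotal : ∀ a b, pref a b ∨ pref b a) :
    ¬ ∃ (n : ℕ) (a b : Fin n → Ω) (c : Fin n → ℝ),
        1 ≤ n ∧ (∀ i, 0 < c i) ∧
        (∀ i, pref (a i) (b i)) ∧
        (∀ ω, (∑ i, c i * indicator1 (a i) ω) ≤ ∑ i, c i * indicator1 (b i) ω) ∧
        ((∃ k, ¬ pref (b k) (a k)) ∨
          (fun ω => ∑ i, c i * indicator1 (b i) ω) ≠
            (fun ω => ∑ i, c i * indicator1 (a i) ω)) := by
  rintro ⟨n, a, b, c, -, hc, hab, hle, hstrict⟩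
  have : IsTrans Ω pref := ⟨htrans⟩
  obtain ⟨hba, heq⟩ := singleton_indicator_system_coherent_general pref a b c hc hab hle
  exact hstrict.elim (fun ⟨k, hk⟩ => hk (hba k)) (fun hne => hne (funext heq))
end

section
/- Let Ω = {q ∈ ℚ : q > 0}, let α be a positive irrational real number, and define gambles g₁, g₂ : Ω → ℝ by g₁(q) = −(q+α)/(2αq) if q > α and g₁(q) = (q+α)/(2αq) if q < α, and g₂(q) = 1 if q > α and g₂(q) = −1 if q < α. Let X = {0, g₁, g₂} and let ≿ be the binary relation on X holding exactly for the pairs (0, g₁) and (0, g₂). Then (X, ≿) is ℚ-linearly coherent with respect to weak dominance: there are no n ≥ 1, gambles f₁,…,fₙ, g′₁,…,g′ₙ ∈ X, and positive rationals c₁,…,cₙ such that (C1) fᵢ ≿ g′ᵢ for all i; (C2) Σᵢ cᵢ·g′ᵢ ≥ Σᵢ cᵢ·fᵢ pointwise; and (C3|4) either g′ₖ ̸≿ fₖ for some k, or Σᵢ cᵢ·g′ᵢ weakly dominates Σᵢ cᵢ·fᵢ. -/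
/-- `f` weakly dominates `g`: `g ≤ f` pointwise and `g ≠ f`. -/
def WeaklyDominates {Ω : Type*} (f g : Ω → ℝ) : Prop :=
  (∀ ω, g ω ≤ f ω) ∧ g ≠ f

/-! As `q` tends to `α`, the pair `(g₁ q, g₂ q)` tends to `(-1/α, 1)` from the right and to
`(1/α, -1)` from the left. A combination of `g₁` and `g₂` that is nonnegative everywhere
therefore has a limit at `α` that is both nonnegative and nonpositive, so its coefficients give a
linear relation between `1/α` and `1`. These are linearly independent over `ℚ`, whereas positive
coefficients cannot cancel. -/

open Filter Topology

theorem sum_smul_ne_zero_of_linearIndependent {R E ι κ : Type*} [Semiring R] [PartialOrder R]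
    [IsOrderedCancelAddMonoid R] [AddCommMonoid E] [Module R E] {v : κ → E}
    (hv : LinearIndependent R v) {s : Finset ι} (hs : s.Nonempty) (k : ι → κ) {c : ι → R}
    (hc : ∀ i ∈ s, 0 < c i) : ∑ i ∈ s, c i • v (k i) ≠ 0 := by
  intro h
  have hsingle : ∑ i ∈ s, Finsupp.single (k i) (c i) = 0 := by
    apply hv.finsuppLinearCombination_injective
    simpa only [map_sum, Finsupp.linearCombination_single, map_zero] using h
  have hmass : ∑ i ∈ s, c i = 0 := by
    simpa only [map_sum, Finsupp.degree_single, map_zero] using congrArg Finsupp.degree hsingle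
  exact (Finset.sum_pos hc hs).ne' hmass

theorem linearIndependent_neg_inv_one {K L : Type*} [Field K] [Field L] [Algebra K L] {a : L}
    (ha : a ∉ Set.range (algebraMap K L)) : LinearIndependent K ![-a⁻¹, 1] := by
  have ha₀ : a ≠ 0 := by
    rintro rfl
    exact ha ⟨0, map_zero _⟩
  refine LinearIndependent.pair_iff.2 fun s t h ↦ ?_
  have hst : algebraMap K L s = algebraMap K L t * a := by
    simp only [Algebra.smul_def] at h
    field_simp at h
    linear_combination -h
  have ht : t = 0 := by
    by_contra ht
    refine ha ⟨s / t, ?_⟩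
    rw [map_div₀, hst, mul_div_cancel_left₀ a (by simpa using ht)]
  subst ht
  simpa using hst

theorem eq_zero_of_tendsto_of_tendsto_neg {Ω E : Type*} [AddCommGroup E] [PartialOrder E]
    [IsOrderedAddMonoid E] [TopologicalSpace E] [OrderClosedTopology E] {l l' : Filter Ω}
    [l.NeBot] [l'.NeBot] {F : Ω → E} {x : E} (hF : ∀ ω, 0 ≤ F ω) (h : Tendsto F l (𝓝 x))
    (h' : Tendsto F l' (𝓝 (-x))) : x = 0 :=
  le_antisymm (neg_nonneg.1 (ge_of_tendsto' h' hF)) (ge_of_tendsto' h hF)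

theorem not_forall_sum_smul_nonneg_of_tendsto {R E Ω ι κ : Type*} [Semiring R] [PartialOrder R]
    [IsOrderedCancelAddMonoid R] [AddCommGroup E] [PartialOrder E] [IsOrderedAddMonoid E]
    [TopologicalSpace E] [OrderClosedTopology E] [ContinuousAdd E] [Module R E]
    [ContinuousConstSMul R E] {l l' : Filter Ω} [l.NeBot] [l'.NeBot] {φ : κ → Ω → E} {v : κ → E}
    (hv : LinearIndependent R v) (h : ∀ j, Tendsto (φ j) l (𝓝 (v j)))
    (h' : ∀ j, Tendsto (φ j) l' (𝓝 (-v j))) {s : Finset ι} (hs : s.Nonempty) (k : ι → κ)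
    {c : ι → R} (hc : ∀ i ∈ s, 0 < c i) : ¬ ∀ ω, 0 ≤ ∑ i ∈ s, c i • φ (k i) ω := by
  intro hF
  refine sum_smul_ne_zero_of_linearIndependent hv hs k hc
    (eq_zero_of_tendsto_of_tendsto_neg (l := l) (l' := l') hF ?_ ?_)
  · exact tendsto_finsetSum s fun i _ ↦ (h (k i)).const_smul (c i)
  · simpa only [smul_neg, Finset.sum_neg_distrib] using
      tendsto_finsetSum s fun i _ ↦ (h' (k i)).const_smul (c i)

theorem tendsto_comap_nhdsWithin_of_eq_comp {X Y Ω : Type*} [TopologicalSpace X] {u : Ω → X}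
    {g : Ω → Y} {h : X → Y} {S : Set X} {a : X} {l : Filter Y} (hh : Tendsto h (𝓝[S] a) l)
    (hg : ∀ ω, u ω ∈ S → g ω = h (u ω)) : Tendsto g (comap u (𝓝[S] a)) l :=
  (hh.comp tendsto_comap).congr' <|
    ((eventually_mem_nhdsWithin (a := a)).comap u).mono fun ω hω ↦ (hg ω hω).symm

theorem tendsto_add_div_two_mul_mul {α : ℝ} (hα : α ≠ 0) :
    Tendsto (fun x ↦ (x + α) / (2 * α * x)) (𝓝 α) (𝓝 α⁻¹) := by
  have hval : (α + α) / (2 * α * α) = α⁻¹ := by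
    field_simp
    ring
  rw [← hval]
  exact ContinuousAt.div (by fun_prop) (by fun_prop) (by positivity)

theorem frequently_nhdsGT_mem_range_posRat {α : ℝ} (hα : 0 ≤ α) :
    ∃ᶠ x in 𝓝[>] α, x ∈ Set.range fun q : {q : ℚ // 0 < q} ↦ ((q : ℚ) : ℝ) := by
  refine (nhdsGT_basis α).frequently_iff.2 fun b hb ↦ ?_
  obtain ⟨q, hαq, hqb⟩ := exists_rat_btwn hb
  exact ⟨q, ⟨hαq, hqb⟩, ⟨q, by exact_mod_cast hα.trans_lt hαq⟩, rfl⟩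

theorem frequently_nhdsLT_mem_range_posRat {α : ℝ} (hα : 0 < α) :
    ∃ᶠ x in 𝓝[<] α, x ∈ Set.range fun q : {q : ℚ // 0 < q} ↦ ((q : ℚ) : ℝ) := by
  refine (nhdsLT_basis α).frequently_iff.2 fun a ha ↦ ?_
  obtain ⟨q, hq, hqα⟩ := exists_rat_btwn (max_lt ha hα)
  obtain ⟨haq, hq₀⟩ := max_lt_iff.1 hq
  exact ⟨q, ⟨haq, hqα⟩, ⟨q, by exact_mod_cast hq₀⟩, rfl⟩

theorem qlinear_coherent_general {K Ω ι : Type*} [Field K] [LinearOrder K] [IsStrictOrderedRing K]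
    [Algebra K ℝ] [Fintype ι] [Nonempty ι] {α : ℝ} (hα : α ∉ Set.range (algebraMap K ℝ))
    (u : Ω → ℝ) (hgt : ∃ᶠ x in 𝓝[>] α, x ∈ Set.range u) (hlt : ∃ᶠ x in 𝓝[<] α, x ∈ Set.range u)
    {g₁ g₂ : Ω → ℝ} (hg₁gt : ∀ ω, α < u ω → g₁ ω = -((u ω + α) / (2 * α * u ω)))
    (hg₁lt : ∀ ω, u ω < α → g₁ ω = (u ω + α) / (2 * α * u ω))
    (hg₂gt : ∀ ω, α < u ω → g₂ ω = 1) (hg₂lt : ∀ ω, u ω < α → g₂ ω = -1)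
    (f g : ι → Ω → ℝ) (hfg : ∀ i, f i = 0 ∧ (g i = g₁ ∨ g i = g₂)) {c : ι → K}
    (hc : ∀ i, 0 < c i) : ¬ ∀ ω, ∑ i, c i • f i ω ≤ ∑ i, c i • g i ω := by
  intro hle
  have : (comap u (𝓝[>] α)).NeBot := comap_neBot_iff_frequently.2 hgt
  have : (comap u (𝓝[<] α)).NeBot := comap_neBot_iff_frequently.2 hlt
  have hα₀ : α ≠ 0 := fun h ↦ hα ⟨0, by rw [map_zero, h]⟩
  have hlim := tendsto_add_div_two_mul_mul hα₀
  have hg₁right : Tendsto g₁ (comap u (𝓝[>] α)) (𝓝 (-α⁻¹)) :=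
    tendsto_comap_nhdsWithin_of_eq_comp (hlim.neg.mono_left nhdsWithin_le_nhds) hg₁gt
  have hg₁left : Tendsto g₁ (comap u (𝓝[<] α)) (𝓝 α⁻¹) :=
    tendsto_comap_nhdsWithin_of_eq_comp (hlim.mono_left nhdsWithin_le_nhds) hg₁lt
  have hg₂right : Tendsto g₂ (comap u (𝓝[>] α)) (𝓝 1) :=
    tendsto_comap_nhdsWithin_of_eq_comp tendsto_const_nhds hg₂gt
  have hg₂left : Tendsto g₂ (comap u (𝓝[<] α)) (𝓝 (-1)) :=
    tendsto_comap_nhdsWithin_of_eq_comp tendsto_const_nhds hg₂lt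
  have hright : ∀ j, Tendsto (![g₁, g₂] j) (comap u (𝓝[>] α)) (𝓝 (![-α⁻¹, 1] j)) :=
    Fin.forall_fin_two.2 ⟨hg₁right, hg₂right⟩
  have hleft : ∀ j, Tendsto (![g₁, g₂] j) (comap u (𝓝[<] α)) (𝓝 (-![-α⁻¹, 1] j)) :=
    Fin.forall_fin_two.2 ⟨by simpa using hg₁left, hg₂left⟩
  have hindex : ∀ i, ∃ j, g i = ![g₁, g₂] j := fun i ↦ Fin.exists_fin_two.2 (hfg i).2
  choose k hk using hindex
  have hf : ∀ i, f i = 0 := fun i ↦ (hfg i).1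
  have hnonneg : ∀ ω, 0 ≤ ∑ i, c i • ![g₁, g₂] (k i) ω := fun ω ↦ by
    simpa only [hf, Pi.zero_apply, smul_zero, Finset.sum_const_zero, hk] using hle ω
  have hindep : LinearIndependent K ![-α⁻¹, 1] := linearIndependent_neg_inv_one hα
  exact not_forall_sum_smul_nonneg_of_tendsto hindep hright hleft
    Finset.univ_nonempty k (fun i _ ↦ hc i) hnonneg

/-- The comparative expectation system determined by `𝟎 ≻ g₁` and `𝟎 ≻ g₂` on the positive
rationals is `ℚ`-linearly coherent with respect to weak dominance. -/
theorem qlinear_coherent (α : ℝ) (hαpos : 0 < α) (hαirr : Irrational α)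
    (g₁ g₂ : {q : ℚ // 0 < q} → ℝ)
    (hg₁gt : ∀ q : {q : ℚ // 0 < q}, α < ((q : ℚ) : ℝ) →
      g₁ q = -((((q : ℚ) : ℝ) + α) / (2 * α * ((q : ℚ) : ℝ))))
    (hg₁lt : ∀ q : {q : ℚ // 0 < q}, ((q : ℚ) : ℝ) < α →
      g₁ q = (((q : ℚ) : ℝ) + α) / (2 * α * ((q : ℚ) : ℝ)))
    (hg₂gt : ∀ q : {q : ℚ // 0 < q}, α < ((q : ℚ) : ℝ) → g₂ q = 1)
    (hg₂lt : ∀ q : {q : ℚ // 0 < q}, ((q : ℚ) : ℝ) < α → g₂ q = -1)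
    (X : Set ({q : ℚ // 0 < q} → ℝ)) (hX : X = {0, g₁, g₂})
    (pref : ({q : ℚ // 0 < q} → ℝ) → ({q : ℚ // 0 < q} → ℝ) → Prop)
    (hpref : ∀ f g, pref f g ↔ (f = 0 ∧ (g = g₁ ∨ g = g₂))) :
    ¬ ∃ (n : ℕ) (f g : Fin n → ({q : ℚ // 0 < q} → ℝ)) (c : Fin n → ℚ),
        1 ≤ n ∧
        (∀ i, f i ∈ X) ∧ (∀ i, g i ∈ X) ∧ (∀ i, 0 < c i) ∧
        (∀ i, pref (f i) (g i)) ∧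
        (∀ ω, (∑ i, (c i : ℝ) * f i ω) ≤ ∑ i, (c i : ℝ) * g i ω) ∧
        ((∃ k, ¬ pref (g k) (f k)) ∨
          WeaklyDominates (fun ω => ∑ i, (c i : ℝ) * g i ω)
            (fun ω => ∑ i, (c i : ℝ) * f i ω)) := by
  rintro ⟨n, f, g, c, hn, -, -, hc, hp, hle, -⟩
  have : Nonempty (Fin n) := ⟨⟨0, hn⟩⟩
  refine qlinear_coherent_general hαirr (fun q : {q : ℚ // 0 < q} ↦ ((q : ℚ) : ℝ))
    (frequently_nhdsGT_mem_range_posRat hαpos.le) (frequently_nhdsLT_mem_range_posRat hαpos)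
    hg₁gt hg₁lt hg₂gt hg₂lt f g (fun i ↦ (hpref _ _).1 (hp i)) hc ?_
  simpa only [Rat.smul_def] using hle
end

section
/- Let Ω = {q ∈ ℚ : q > 0}, let α be a positive irrational real number, and define gambles g₁, g₂ : Ω → ℝ by g₁(q) = −(q+α)/(2αq) if q > α and g₁(q) = (q+α)/(2αq) if q < α, and g₂(q) = 1 if q > α and g₂(q) = −1 if q < α. Let X = {0, g₁, g₂} and let ≿ be the binary relation on X holding exactly for the pairs (0, g₁) and (0, g₂). Then (X, ≿) is ℝ-linearly incoherent with respect to simple dominance, so conditions (C1), (C2), and (C4) of simple-dominance coherence are violated: with f₁ = f₂ = 0, c₁ = α, c₂ = 1 we have fᵢ ≿ gᵢ for i = 1, 2, and α·g₁(q) + g₂(q) > 0 = α·f₁(q) + f₂(q) for every q ∈ Ω, hence c₁·g₁ + c₂·g₂ simply dominates c₁·f₁ + c₂·f₂. -/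
/-- `f` simply dominates `g`: `g ω < f ω` for all states `ω`. -/
def SimplyDominates {Ω : Type*} (f g : Ω → ℝ) : Prop :=
  ∀ ω, g ω < f ω

/-- `⊳`-coherence (with real coefficients) of the comparative expectation system. -/
def Coherent {Ω : Type*} (R : (Ω → ℝ) → (Ω → ℝ) → Prop)
    (X : Set (Ω → ℝ)) (pref : (Ω → ℝ) → (Ω → ℝ) → Prop) : Prop :=
  ¬ ∃ (n : ℕ) (f g : Fin n → Ω → ℝ) (c : Fin n → ℝ),
      1 ≤ n ∧
      (∀ i, f i ∈ X) ∧ (∀ i, g i ∈ X) ∧ (∀ i, 0 < c i) ∧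
      (∀ i, pref (f i) (g i)) ∧
      (∀ ω, (∑ i, c i * f i ω) ≤ ∑ i, c i * g i ω) ∧
      ((∃ k, ¬ pref (g k) (f k)) ∨
        R (fun ω => ∑ i, c i * g i ω) (fun ω => ∑ i, c i * f i ω))

/-!
The weighted sum `α • g₁ + g₂` takes the value `|q - α| / (2 * q)` at each state `q`. This is
positive unless `q = α`, so weights `α` and `1` trade the zero gamble for one that dominates it.
-/

theorem not_coherent_of_sum {Ω ι : Type*} [Fintype ι] [Nonempty ι]
    {R : (Ω → ℝ) → (Ω → ℝ) → Prop} {X : Set (Ω → ℝ)} {pref : (Ω → ℝ) → (Ω → ℝ) → Prop}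
    {f g : ι → Ω → ℝ} {c : ι → ℝ} (hf : ∀ i, f i ∈ X) (hg : ∀ i, g i ∈ X) (hc : ∀ i, 0 < c i)
    (hpref : ∀ i, pref (f i) (g i)) (hle : ∑ i, c i • f i ≤ ∑ i, c i • g i)
    (hR : R (∑ i, c i • g i) (∑ i, c i • f i)) : ¬ Coherent R X pref := by
  let e : Fin (Fintype.card ι) ≃ ι := (Fintype.equivFin ι).symm
  have sum_reindex (h : ι → Ω → ℝ) :
      (fun ω => ∑ k, c (e k) * h (e k) ω) = ∑ i, c i • h i := by
    ext ω
    simpa only [Finset.sum_apply, Pi.smul_apply, smul_eq_mul] using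
      e.sum_comp fun i => c i * h i ω
  rw [← sum_reindex f, ← sum_reindex g] at hle hR
  exact not_not_intro ⟨_, f ∘ e, g ∘ e, c ∘ e, Fintype.card_pos, fun k => hf (e k),
    fun k => hg (e k), fun k => hc (e k), fun k => hpref (e k), hle, Or.inr hR⟩

theorem SimplyDominates.le {Ω : Type*} {f g : Ω → ℝ} (h : SimplyDominates f g) : g ≤ f :=
  fun ω => (h ω).le

theorem not_coherent_of_pref_zero_of_simplyDominates_zero {Ω ι : Type*} [Fintype ι] [Nonempty ι]
    {X : Set (Ω → ℝ)} {pref : (Ω → ℝ) → (Ω → ℝ) → Prop} {g : ι → Ω → ℝ} {c : ι → ℝ}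
    (h0 : 0 ∈ X) (hg : ∀ i, g i ∈ X) (hc : ∀ i, 0 < c i) (hpref : ∀ i, pref 0 (g i))
    (hdom : SimplyDominates (∑ i, c i • g i) 0) : ¬ Coherent SimplyDominates X pref := by
  have sum_zero : ∑ i, c i • (0 : Ω → ℝ) = 0 := by simp only [smul_zero, Finset.sum_const_zero]
  rw [← sum_zero] at hdom
  exact not_coherent_of_sum (fun _ => h0) hg hc hpref hdom.le hdom

theorem mul_add_div_two_mul_mul_sub_one {K : Type*} [Field K] [NeZero (2 : K)] {a x : K}
    (ha : a ≠ 0) (hx : x ≠ 0) : a * ((x + a) / (2 * a * x)) - 1 = (a - x) / (2 * x) := by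
  field_simp
  ring

theorem mul_add_eq_abs_sub_div {K : Type*} [Field K] [LinearOrder K] [IsStrictOrderedRing K]
    {a x u v : K} (ha : a ≠ 0) (hx : x ≠ 0) (hxa : x ≠ a)
    (hu_gt : a < x → u = -((x + a) / (2 * a * x))) (hu_lt : x < a → u = (x + a) / (2 * a * x))
    (hv_gt : a < x → v = 1) (hv_lt : x < a → v = -1) :
    a * u + v = |x - a| / (2 * x) := by
  have key := mul_add_div_two_mul_mul_sub_one ha hx
  rcases hxa.lt_or_gt with hlt | hgt
  · rw [hu_lt hlt, hv_lt hlt, abs_sub_comm, abs_of_pos (sub_pos.2 hlt), ← key, sub_eq_add_neg]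
  · rw [hu_gt hgt, hv_gt hgt, abs_of_pos (sub_pos.2 hgt), ← neg_sub a x, neg_div, ← key]
    ring

theorem rlinear_incoherent_simple_dominance_general {Ω : Type*} {x : Ω → ℝ} {α : ℝ} (hα : 0 < α)
    (hx : ∀ ω, 0 < x ω) (hxα : ∀ ω, x ω ≠ α) {g₁ g₂ : Ω → ℝ}
    (hg₁gt : ∀ ω, α < x ω → g₁ ω = -((x ω + α) / (2 * α * x ω)))
    (hg₁lt : ∀ ω, x ω < α → g₁ ω = (x ω + α) / (2 * α * x ω))
    (hg₂gt : ∀ ω, α < x ω → g₂ ω = 1) (hg₂lt : ∀ ω, x ω < α → g₂ ω = -1)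
    {X : Set (Ω → ℝ)} (h0 : 0 ∈ X) (hg₁ : g₁ ∈ X) (hg₂ : g₂ ∈ X)
    {pref : (Ω → ℝ) → (Ω → ℝ) → Prop} (hpref₁ : pref 0 g₁) (hpref₂ : pref 0 g₂) :
    (∀ ω, 0 < α * g₁ ω + g₂ ω) ∧ SimplyDominates (α • g₁ + g₂) 0 ∧
      ¬ Coherent SimplyDominates X pref := by
  have hpos (ω : Ω) : 0 < α * g₁ ω + g₂ ω := by
    rw [mul_add_eq_abs_sub_div hα.ne' (hx ω).ne' (hxα ω) (hg₁gt ω) (hg₁lt ω) (hg₂gt ω) (hg₂lt ω)]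
    exact div_pos (abs_sub_pos.2 (hxα ω)) (mul_pos two_pos (hx ω))
  have hdom : SimplyDominates (α • g₁ + g₂) 0 := hpos
  refine ⟨hpos, hdom, not_coherent_of_pref_zero_of_simplyDominates_zero
    (g := ![g₁, g₂]) (c := ![α, 1]) h0 ?_ ?_ ?_ ?_⟩
  · exact Fin.forall_fin_two.2 ⟨hg₁, hg₂⟩
  · exact Fin.forall_fin_two.2 ⟨hα, one_pos⟩
  · exact Fin.forall_fin_two.2 ⟨hpref₁, hpref₂⟩
  · simpa [Fin.sum_univ_two] using hdom

/-- The comparative expectation system determined by `𝟎 ≻ g₁` and `𝟎 ≻ g₂` on the positive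
rationals is `ℝ`-linearly incoherent with respect to simple dominance, as witnessed by
`f₁ = f₂ = 𝟎`, `c₁ = α`, `c₂ = 1`: one has `𝟎 ≿ g₁`, `𝟎 ≿ g₂`, and `α·g₁ + g₂` exceeds `0`
at every state, so `α·g₁ + g₂` simply dominates the zero gamble. -/
theorem rlinear_incoherent_simple_dominance (α : ℝ) (hαpos : 0 < α) (hαirr : Irrational α)
    (g₁ g₂ : {q : ℚ // 0 < q} → ℝ)
    (hg₁gt : ∀ q : {q : ℚ // 0 < q}, α < ((q : ℚ) : ℝ) →
      g₁ q = -((((q : ℚ) : ℝ) + α) / (2 * α * ((q : ℚ) : ℝ))))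
    (hg₁lt : ∀ q : {q : ℚ // 0 < q}, ((q : ℚ) : ℝ) < α →
      g₁ q = (((q : ℚ) : ℝ) + α) / (2 * α * ((q : ℚ) : ℝ)))
    (hg₂gt : ∀ q : {q : ℚ // 0 < q}, α < ((q : ℚ) : ℝ) → g₂ q = 1)
    (hg₂lt : ∀ q : {q : ℚ // 0 < q}, ((q : ℚ) : ℝ) < α → g₂ q = -1)
    (X : Set ({q : ℚ // 0 < q} → ℝ)) (hX : X = {0, g₁, g₂})
    (pref : ({q : ℚ // 0 < q} → ℝ) → ({q : ℚ // 0 < q} → ℝ) → Prop)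
    (hpref : ∀ f g, pref f g ↔ (f = 0 ∧ (g = g₁ ∨ g = g₂))) :
    pref 0 g₁ ∧ pref 0 g₂ ∧
    (∀ q : {q : ℚ // 0 < q}, 0 < α * g₁ q + g₂ q) ∧
    SimplyDominates (α • g₁ + g₂) 0 ∧
    ¬ Coherent SimplyDominates X pref := by
  have hpref₁ : pref 0 g₁ := (hpref 0 g₁).2 ⟨rfl, Or.inl rfl⟩
  have hpref₂ : pref 0 g₂ := (hpref 0 g₂).2 ⟨rfl, Or.inr rfl⟩
  subst hX
  exact ⟨hpref₁, hpref₂, rlinear_incoherent_simple_dominance_general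
    hαpos (fun q : {q : ℚ // 0 < q} => Rat.cast_pos.2 q.2) (fun q => (hαirr.ne_rat q).symm)
    hg₁gt hg₁lt hg₂gt hg₂lt (.inl rfl) (.inr (.inl rfl)) (.inr (.inr rfl)) hpref₁ hpref₂⟩
end

section
/- Let Ω be a nonempty set, let L be a linear subspace of ℝ^Ω consisting of bounded gambles and containing all constant gambles, let (L, ≿) be a comparative prevision system, and let ℙ : L → ℝ be a price function for ≿, i.e., for each f ∈ L, f ∼ (constant gamble ℙ(f)). Then (L, ≿) is de Finetti coherent if and only if ℙ satisfies: ℙ(1) = 1; ℙ(r·f + s·g) = r·ℙ(f) + s·ℙ(g) for all r, s ∈ ℝ and f, g ∈ L; ℙ(f) > ℙ(g) whenever f uniformly dominates g; and ℙ represents ≿, i.e., f ≿ g if and only if ℙ(f) ≥ ℙ(g) for all f, g ∈ L. -/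
/-- A gamble is bounded if its range lies in some interval `[-n, n]`. -/
def Bounded {Ω : Type*} (f : Ω → ℝ) : Prop :=
  ∃ n : ℕ, ∀ ω, f ω ∈ Set.Icc (-(n : ℝ)) (n : ℝ)

/-- `f` uniformly dominates `g`: `g + c ≤ f` pointwise for some real `c > 0`. -/
def UniformlyDominates {Ω : Type*} (f g : Ω → ℝ) : Prop :=
  ∃ c : ℝ, 0 < c ∧ ∀ ω, g ω + c ≤ f ω

/-- De Finetti coherence (coherence with respect to uniform dominance) of the comparative
expectation system `(X, pref)`. -/
def DeFinettiCoherent {Ω : Type*} (X : Set (Ω → ℝ))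
    (pref : (Ω → ℝ) → (Ω → ℝ) → Prop) : Prop :=
  ¬ ∃ (n : ℕ) (f g : Fin n → Ω → ℝ) (c : Fin n → ℝ),
      1 ≤ n ∧
      (∀ i, f i ∈ X) ∧ (∀ i, g i ∈ X) ∧ (∀ i, 0 < c i) ∧
      (∀ i, pref (f i) (g i)) ∧
      (∀ ω, (∑ i, c i * f i ω) ≤ ∑ i, c i * g i ω) ∧
      ((∃ k, ¬ pref (g k) (f k)) ∨
        UniformlyDominates (fun ω => ∑ i, c i * g i ω) (fun ω => ∑ i, c i * f i ω))

/-- A comparative prevision system: all gambles bounded, the relation complete, and every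
gamble indifferent to some constant gamble in the system. -/
def IsComparativePrevisionSystem {Ω : Type*} (X : Set (Ω → ℝ))
    (pref : (Ω → ℝ) → (Ω → ℝ) → Prop) : Prop :=
  (∀ f ∈ X, Bounded f) ∧
  (∀ f g : Ω → ℝ, f ∈ X → g ∈ X → pref f g ∨ pref g f) ∧
  (∀ f ∈ X, ∃ p : ℝ, (fun _ => p) ∈ X ∧ pref f (fun _ => p) ∧ pref (fun _ => p) f)

/-!
The differences `f - g` with `f ≿ g` generate a convex cone of acceptable exchanges. Coherence says
that no element of this cone is uniformly negative and that an exchange `f - g` which the cone can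
complete to something nonpositive is reversible. Every `f - P f` lies in the lineality space of
the cone, and so do all linear combinations of such gambles; whenever the gambles cancel, what is
left is a constant in the lineality space, and that constant must vanish.
Conversely, a linear monotone `P` that represents `≿` is nonnegative on exchanges, so it vanishes
on each term of a combination that is nonpositive.
-/

section Coherence

variable {Ω : Type*} {X : Set (Ω → ℝ)} {pref : (Ω → ℝ) → (Ω → ℝ) → Prop}

namespace UniformlyDominates

theorem le {f g : Ω → ℝ} (h : UniformlyDominates f g) : g ≤ f := by
  obtain ⟨c, hc, hgf⟩ := h
  exact fun ω => by linarith [hgf ω]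

theorem zero_sub_iff {f g : Ω → ℝ} :
    UniformlyDominates 0 (f - g) ↔ UniformlyDominates g f := by
  simp only [UniformlyDominates, Pi.sub_apply, Pi.zero_apply, sub_add_eq_add_sub, sub_nonpos]

theorem zero_const {c : ℝ} (hc : c < 0) : UniformlyDominates (0 : Ω → ℝ) (fun _ => c) :=
  ⟨-c, neg_pos.mpr hc, fun _ => (add_neg_cancel c).le⟩

end UniformlyDominates

theorem deFinettiCoherent_iff_sum_smul_sub :
    DeFinettiCoherent X pref ↔ ∀ (n : ℕ) (f g : Fin n → Ω → ℝ) (c : Fin n → ℝ), 1 ≤ n →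
      (∀ i, f i ∈ X) → (∀ i, g i ∈ X) → (∀ i, 0 < c i) → (∀ i, pref (f i) (g i)) →
      ∑ i, c i • (f i - g i) ≤ 0 →
      (∀ k, pref (g k) (f k)) ∧ ¬ UniformlyDominates 0 (∑ i, c i • (f i - g i)) := by
  have sum_eq (n : ℕ) (f g : Fin n → Ω → ℝ) (c : Fin n → ℝ) : ∑ i, c i • (f i - g i) =
      (fun ω => ∑ i, c i * f i ω) - (fun ω => ∑ i, c i * g i ω) := by
    ext ω
    simp only [Finset.sum_apply, Pi.smul_apply, Pi.sub_apply, smul_eq_mul, mul_sub,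
      Finset.sum_sub_distrib]
  simp only [DeFinettiCoherent, sum_eq, sub_nonpos, UniformlyDominates.zero_sub_iff, Pi.le_def,
    not_exists, not_and, not_or, not_not]

theorem DeFinettiCoherent.of_fintype {ι : Type*} [Fintype ι] [Nonempty ι]
    (hcoh : DeFinettiCoherent X pref) {f g : ι → Ω → ℝ} {c : ι → ℝ} (hf : ∀ i, f i ∈ X)
    (hg : ∀ i, g i ∈ X) (hc : ∀ i, 0 < c i) (hpref : ∀ i, pref (f i) (g i))
    (hle : ∑ i, c i • (f i - g i) ≤ 0) :
    (∀ k, pref (g k) (f k)) ∧ ¬ UniformlyDominates 0 (∑ i, c i • (f i - g i)) := by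
  let e := (Fintype.equivFin ι).symm
  have sum_eq : ∑ i, c (e i) • (f (e i) - g (e i)) = ∑ i, c i • (f i - g i) :=
    e.sum_comp fun i => c i • (f i - g i)
  have hfin := deFinettiCoherent_iff_sum_smul_sub.mp hcoh (Fintype.card ι) (f ∘ e) (g ∘ e)
    (c ∘ e) Fintype.card_pos (fun _ => hf _) (fun _ => hg _) (fun _ => hc _)
    (fun _ => hpref _) (sum_eq.trans_le hle)
  exact ⟨e.forall_congr_right.mp hfin.1, sum_eq ▸ hfin.2⟩

/-- The cone of acceptable exchanges: nonnegative combinations of the net gains `f - g` from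
giving up `g` for `f`, over all `f, g ∈ X` with `pref f g`. -/
def exchangeCone (X : Set (Ω → ℝ)) (pref : (Ω → ℝ) → (Ω → ℝ) → Prop) :
    PointedCone ℝ (Ω → ℝ) :=
  PointedCone.hull ℝ {d | ∃ f ∈ X, ∃ g ∈ X, pref f g ∧ f - g = d}

theorem sub_mem_exchangeCone {f g : Ω → ℝ} (hf : f ∈ X) (hg : g ∈ X) (hfg : pref f g) :
    f - g ∈ exchangeCone X pref :=
  PointedCone.subset_hull ⟨f, hf, g, hg, hfg, rfl⟩

theorem sub_mem_lineal_exchangeCone {f g : Ω → ℝ} (hf : f ∈ X) (hg : g ∈ X) (hfg : pref f g)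
    (hgf : pref g f) : f - g ∈ (exchangeCone X pref).lineal :=
  PointedCone.mem_lineal.mpr
    ⟨sub_mem_exchangeCone hf hg hfg, neg_sub f g ▸ sub_mem_exchangeCone hg hf hgf⟩

theorem exists_sum_smul_sub_of_mem_exchangeCone {d : Ω → ℝ} (hd : d ∈ exchangeCone X pref) :
    ∃ (s : Finset (Ω → ℝ)) (f g : s → Ω → ℝ) (c : s → ℝ), (∀ i, f i ∈ X) ∧ (∀ i, g i ∈ X) ∧
      (∀ i, 0 < c i) ∧ (∀ i, pref (f i) (g i)) ∧ ∑ i, c i • (f i - g i) = d := by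
  obtain ⟨c, hsupport, hc, hsum⟩ := PointedCone.mem_hull_set.mp hd
  choose f hf g hg hpref hsub using fun i : c.support => hsupport i.2
  refine ⟨c.support, f, g, fun i => c i, hf, hg,
    fun i => (hc i).lt_of_ne' (Finsupp.mem_support_iff.mp i.2), hpref, ?_⟩
  simp only [hsub]
  exact (Finset.sum_coe_sort c.support fun y => c y • y).trans hsum

theorem DeFinettiCoherent.of_mem_exchangeCone (hcoh : DeFinettiCoherent X pref) {f g d : Ω → ℝ}
    (hf : f ∈ X) (hg : g ∈ X) (hfg : pref f g) (hd : d ∈ exchangeCone X pref)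
    (hle : f - g + d ≤ 0) : pref g f ∧ ¬ UniformlyDominates 0 (f - g + d) := by
  obtain ⟨s, F, G, c, hF, hG, hc, hpref, rfl⟩ := exists_sum_smul_sub_of_mem_exchangeCone hd
  have sum_eq : ∑ i : Option s, i.elim 1 c • (i.elim f F - i.elim g G) =
      f - g + ∑ i, c i • (F i - G i) := by
    simp only [Fintype.sum_option, Option.elim_none, Option.elim_some, one_smul]
  have hopt := hcoh.of_fintype (f := fun i : Option s => i.elim f F)
    (g := fun i => i.elim g G) (c := fun i => i.elim 1 c)
    (Option.forall.mpr ⟨hf, hF⟩) (Option.forall.mpr ⟨hg, hG⟩)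
    (Option.forall.mpr ⟨one_pos, hc⟩) (Option.forall.mpr ⟨hfg, hpref⟩) (sum_eq.trans_le hle)
  exact ⟨hopt.1 none, sum_eq ▸ hopt.2⟩

end Coherence

/-- `P` is a price function for `pref` on `X`: each `f ∈ X` is indifferent to the constant gamble
`P f`, which is itself required to belong to `X`. -/
def IsPrice {Ω : Type*} (X : Set (Ω → ℝ)) (pref : (Ω → ℝ) → (Ω → ℝ) → Prop)
    (P : (Ω → ℝ) → ℝ) : Prop :=
  ∀ f ∈ X, (fun _ => P f) ∈ X ∧ pref f (fun _ => P f) ∧ pref (fun _ => P f) f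

namespace IsPrice

variable {Ω : Type*} {X : Set (Ω → ℝ)} {pref : (Ω → ℝ) → (Ω → ℝ) → Prop} {P : (Ω → ℝ) → ℝ}
  {f g : Ω → ℝ}

theorem sub_mem_lineal (hP : IsPrice X pref P) (hf : f ∈ X) :
    f - (fun _ => P f) ∈ (exchangeCone X pref).lineal :=
  let ⟨hPf, hfP, hPf'⟩ := hP f hf
  sub_mem_lineal_exchangeCone hf hPf hfP hPf'

theorem not_uniformlyDominates_zero (hP : IsPrice X pref P) (hcoh : DeFinettiCoherent X pref)
    (hX : X.Nonempty) {d : Ω → ℝ} (hd : d ∈ exchangeCone X pref) :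
    ¬ UniformlyDominates 0 d := by
  obtain ⟨f, hf⟩ := hX
  obtain ⟨hPf, hfP, hPf'⟩ := hP f hf
  have hcancel : f - (fun _ => P f) + ((fun _ => P f) - f + d) = d := by abel
  intro hdom
  refine (hcoh.of_mem_exchangeCone hf hPf hfP
    (add_mem (sub_mem_exchangeCone hPf hf hPf') hd) ?_).2 ?_
  · exact hcancel.trans_le hdom.le
  · rwa [hcancel]

theorem eq_zero_of_const_mem_lineal (hP : IsPrice X pref P) (hcoh : DeFinettiCoherent X pref)
    (hX : X.Nonempty) {c : ℝ} (hc : (fun _ => c) ∈ (exchangeCone X pref).lineal) : c = 0 := by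
  obtain ⟨hpos, hneg⟩ := PointedCone.mem_lineal.mp hc
  apply le_antisymm
  · by_contra! h
    exact hP.not_uniformlyDominates_zero hcoh hX hneg (.zero_const (neg_lt_zero.mpr h))
  · by_contra! h
    exact hP.not_uniformlyDominates_zero hcoh hX hpos (.zero_const h)

theorem apply_const (hP : IsPrice X pref P) (hcoh : DeFinettiCoherent X pref) {c : ℝ}
    (hc : (fun _ => c) ∈ X) : P (fun _ => c) = c :=
  (sub_eq_zero.mp <| hP.eq_zero_of_const_mem_lineal hcoh ⟨_, hc⟩ (hP.sub_mem_lineal hc)).symm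

theorem apply_smul_add_smul (hP : IsPrice X pref P) (hcoh : DeFinettiCoherent X pref) {r s : ℝ}
    (hf : f ∈ X) (hg : g ∈ X) (hfg : r • f + s • g ∈ X) :
    P (r • f + s • g) = r * P f + s * P g := by
  have hmem := sub_mem
    (add_mem (Submodule.smul_mem _ r (hP.sub_mem_lineal hf))
      (Submodule.smul_mem _ s (hP.sub_mem_lineal hg)))
    (hP.sub_mem_lineal hfg)
  have hconst : r • (f - fun _ => P f) + s • (g - fun _ => P g) -
      (r • f + s • g - fun _ => P (r • f + s • g)) =
      fun _ => P (r • f + s • g) - (r * P f + s * P g) := by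
    ext ω
    simp only [Pi.add_apply, Pi.sub_apply, Pi.smul_apply, smul_eq_mul]
    ring
  rw [hconst] at hmem
  exact sub_eq_zero.mp (hP.eq_zero_of_const_mem_lineal hcoh ⟨f, hf⟩ hmem)

theorem sub_add_const_mem_exchangeCone (hP : IsPrice X pref P) (hf : f ∈ X) (hg : g ∈ X) :
    g - f + (fun _ => P f - P g) ∈ exchangeCone X pref := by
  have hmem := sub_mem (hP.sub_mem_lineal hg) (hP.sub_mem_lineal hf)
  convert PointedCone.lineal_le _ hmem using 1
  ext ω
  simp only [Pi.add_apply, Pi.sub_apply]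
  ring

theorem lt_of_uniformlyDominates (hP : IsPrice X pref P) (hcoh : DeFinettiCoherent X pref)
    (hf : f ∈ X) (hg : g ∈ X) (hfg : UniformlyDominates f g) : P g < P f := by
  obtain ⟨c, hc, hle⟩ := hfg
  by_contra! hPle
  refine hP.not_uniformlyDominates_zero hcoh ⟨f, hf⟩ (hP.sub_add_const_mem_exchangeCone hf hg)
    ⟨c, hc, fun ω => ?_⟩
  simp only [Pi.add_apply, Pi.sub_apply, Pi.zero_apply]
  linarith [hle ω]

theorem le_of_pref (hP : IsPrice X pref P) (hcoh : DeFinettiCoherent X pref)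
    (hf : f ∈ X) (hg : g ∈ X) (hfg : pref f g) : P g ≤ P f := by
  by_contra! hlt
  have hmem := add_mem (sub_mem_exchangeCone hf hg hfg) (hP.sub_add_const_mem_exchangeCone hf hg)
  rw [← add_assoc, sub_add_sub_cancel, sub_self, zero_add] at hmem
  exact hP.not_uniformlyDominates_zero hcoh ⟨f, hf⟩ hmem (.zero_const (sub_neg.mpr hlt))

theorem pref_of_le (hP : IsPrice X pref P) (hcoh : DeFinettiCoherent X pref)
    (hf : f ∈ X) (hg : g ∈ X) (htotal : pref f g ∨ pref g f) (hle : P g ≤ P f) : pref f g := by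
  refine htotal.elim id fun hgf => (hcoh.of_mem_exchangeCone hg hf hgf
    (hP.sub_add_const_mem_exchangeCone hg hf) ?_).1
  rw [← add_assoc, sub_add_sub_cancel, sub_self, zero_add]
  exact fun _ => sub_nonpos.mpr hle

end IsPrice

/-- A finitely additive expectation on the space of gambles `L`: a normalized linear functional
that is strictly monotone for uniform dominance. As in the notion of a price function, `P` is
defined on all of `Ω → ℝ` but constrained only on `L`. -/
structure IsExpectation {Ω : Type*} (L : Submodule ℝ (Ω → ℝ)) (P : (Ω → ℝ) → ℝ) : Prop where
  apply_one : P (fun _ => 1) = 1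
  apply_smul_add_smul : ∀ (r s : ℝ) (f g : Ω → ℝ), f ∈ L → g ∈ L →
    P (r • f + s • g) = r * P f + s * P g
  lt_of_uniformlyDominates : ∀ f g : Ω → ℝ, f ∈ L → g ∈ L → UniformlyDominates f g → P g < P f

namespace IsExpectation

variable {Ω : Type*} {L : Submodule ℝ (Ω → ℝ)} {P : (Ω → ℝ) → ℝ}

theorem apply_zero (hP : IsExpectation L P) : P 0 = 0 := by
  simpa only [zero_smul, add_zero, zero_mul] using
    hP.apply_smul_add_smul 0 0 0 0 L.zero_mem L.zero_mem

theorem apply_sub (hP : IsExpectation L P) {f g : Ω → ℝ} (hf : f ∈ L) (hg : g ∈ L) :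
    P (f - g) = P f - P g := by
  simpa only [one_smul, neg_smul, one_mul, neg_mul, ← sub_eq_add_neg] using
    hP.apply_smul_add_smul 1 (-1) f g hf hg

theorem apply_sum_smul (hP : IsExpectation L P) {ι : Type*} (s : Finset ι) (c : ι → ℝ)
    {f : ι → Ω → ℝ} (hf : ∀ i, f i ∈ L) : P (∑ i ∈ s, c i • f i) = ∑ i ∈ s, c i * P (f i) := by
  induction s using Finset.cons_induction with
  | empty => exact hP.apply_zero
  | cons a s ha ih =>
    have hmem : ∑ i ∈ s, c i • f i ∈ L := L.sum_mem fun i _ => L.smul_mem _ (hf i)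
    rw [Finset.sum_cons, Finset.sum_cons, ← ih]
    simpa only [one_smul, one_mul] using hP.apply_smul_add_smul (c a) 1 _ _ (hf a) hmem

theorem mono (hP : IsExpectation L P) (hone : (fun _ => 1) ∈ L) {f g : Ω → ℝ} (hf : f ∈ L)
    (hg : g ∈ L) (hfg : f ≤ g) : P f ≤ P g := by
  refine le_of_forall_pos_lt_add fun ε hε => ?_
  have hshift : P (g + ε • fun _ => 1) = P g + ε := by
    simpa only [one_smul, one_mul, hP.apply_one, mul_one] using
      hP.apply_smul_add_smul 1 ε g _ hg hone
  rw [← hshift]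
  refine hP.lt_of_uniformlyDominates _ _ (L.add_mem hg (L.smul_mem ε hone)) hf
    ⟨ε, hε, fun ω => ?_⟩
  simpa only [Pi.add_apply, Pi.smul_apply, smul_eq_mul, mul_one] using
    add_le_add_left (hfg ω) ε

theorem deFinettiCoherent (hP : IsExpectation L P) (hone : (fun _ => 1) ∈ L)
    {pref : (Ω → ℝ) → (Ω → ℝ) → Prop}
    (hrep : ∀ f g : Ω → ℝ, f ∈ L → g ∈ L → (pref f g ↔ P g ≤ P f)) :
    DeFinettiCoherent (L : Set (Ω → ℝ)) pref := by
  refine deFinettiCoherent_iff_sum_smul_sub.mpr fun n f g c _ hf hg hc hpref hle => ?_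
  have hsub i : f i - g i ∈ L := L.sub_mem (hf i) (hg i)
  have hsum_mem : ∑ i, c i • (f i - g i) ∈ L := L.sum_mem fun i _ => L.smul_mem _ (hsub i)
  have hterm_nonneg i : 0 ≤ c i * P (f i - g i) := by
    rw [hP.apply_sub (hf i) (hg i)]
    exact mul_nonneg (hc i).le (sub_nonneg.mpr ((hrep _ _ (hf i) (hg i)).mp (hpref i)))
  have hsum_zero : ∑ i, c i * P (f i - g i) = 0 := by
    refine le_antisymm ?_ (Finset.sum_nonneg fun i _ => hterm_nonneg i)
    rw [← hP.apply_sum_smul _ _ hsub, ← hP.apply_zero]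
    exact hP.mono hone hsum_mem L.zero_mem hle
  constructor
  · intro k
    have hterm_zero : c k * P (f k - g k) = 0 :=
      (Finset.sum_eq_zero_iff_of_nonneg fun i _ => hterm_nonneg i).mp hsum_zero k
        (Finset.mem_univ k)
    have hprice_eq : P (f k) - P (g k) = 0 :=
      hP.apply_sub (hf k) (hg k) ▸ (mul_eq_zero.mp hterm_zero).resolve_left (hc k).ne'
    exact (hrep _ _ (hg k) (hf k)).mpr (sub_eq_zero.mp hprice_eq).le
  · intro hdom
    refine (hP.lt_of_uniformlyDominates _ _ L.zero_mem hsum_mem hdom).ne ?_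
    rw [hP.apply_sum_smul _ _ hsub, hsum_zero, hP.apply_zero]

end IsExpectation

theorem deFinetti_coherent_iff_price_is_expectation_general {Ω : Type*}
    (L : Submodule ℝ (Ω → ℝ))
    (hconst : ∀ c : ℝ, (fun _ => c) ∈ L)
    (pref : (Ω → ℝ) → (Ω → ℝ) → Prop)
    (hcomplete : ∀ f g : Ω → ℝ, f ∈ L → g ∈ L → pref f g ∨ pref g f)
    (P : (Ω → ℝ) → ℝ)
    (hprice : ∀ f : Ω → ℝ, f ∈ L →
      pref f (fun _ => P f) ∧ pref (fun _ => P f) f) :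
    DeFinettiCoherent (L : Set (Ω → ℝ)) pref ↔
      (P (fun _ => 1) = 1 ∧
       (∀ (r s : ℝ) (f g : Ω → ℝ), f ∈ L → g ∈ L →
          P (r • f + s • g) = r * P f + s * P g) ∧
       (∀ f g : Ω → ℝ, f ∈ L → g ∈ L → UniformlyDominates f g → P g < P f) ∧
       (∀ f g : Ω → ℝ, f ∈ L → g ∈ L → (pref f g ↔ P g ≤ P f))) := by
  constructor
  · intro hcoh
    have hP : IsPrice (L : Set (Ω → ℝ)) pref P := fun f hf => ⟨hconst _, hprice f hf⟩
    exact ⟨hP.apply_const hcoh (hconst 1),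
      fun r s f g hf hg => hP.apply_smul_add_smul hcoh hf hg
        (L.add_mem (L.smul_mem r hf) (L.smul_mem s hg)),
      fun f g hf hg => hP.lt_of_uniformlyDominates hcoh hf hg,
      fun f g hf hg => ⟨hP.le_of_pref hcoh hf hg,
        hP.pref_of_le hcoh hf hg (hcomplete f g hf hg)⟩⟩
  · rintro ⟨hone, hlinear, hdom, hrep⟩
    exact IsExpectation.deFinettiCoherent ⟨hone, hlinear, hdom⟩ (hconst 1) hrep

/-- A comparative prevision system on a linear space of bounded gambles containing all
constants is de Finetti coherent iff its price function is a real-valued finitely additive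
expectation representing the preference. -/
theorem deFinetti_coherent_iff_price_is_expectation {Ω : Type*} [Nonempty Ω]
    (L : Submodule ℝ (Ω → ℝ))
    (hbdd : ∀ f : Ω → ℝ, f ∈ L → Bounded f)
    (hconst : ∀ c : ℝ, (fun _ => c) ∈ L)
    (pref : (Ω → ℝ) → (Ω → ℝ) → Prop)
    (hcomplete : ∀ f g : Ω → ℝ, f ∈ L → g ∈ L → pref f g ∨ pref g f)
    (P : (Ω → ℝ) → ℝ)
    (hprice : ∀ f : Ω → ℝ, f ∈ L →
      pref f (fun _ => P f) ∧ pref (fun _ => P f) f) :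
    DeFinettiCoherent (L : Set (Ω → ℝ)) pref ↔
      (P (fun _ => 1) = 1 ∧
       (∀ (r s : ℝ) (f g : Ω → ℝ), f ∈ L → g ∈ L →
          P (r • f + s • g) = r * P f + s * P g) ∧
       (∀ f g : Ω → ℝ, f ∈ L → g ∈ L → UniformlyDominates f g → P g < P f) ∧
       (∀ f g : Ω → ℝ, f ∈ L → g ∈ L → (pref f g ↔ P g ≤ P f))) :=
  deFinetti_coherent_iff_price_is_expectation_general L hconst pref hcomplete P hprice
end

section
/- Let Ω be a nonempty set, let (X, ≿) be a de Finetti coherent comparative prevision system on Ω, and let f be a bounded gamble. Then there exist p ∈ ℝ and a binary relation ≿′ on X ∪ {f, constant gamble p} such that (X ∪ {f, constant gamble p}, ≿′) is a de Finetti coherent comparative prevision system extending (X, ≿) (≿ ⊆ ≿′ and the asymmetric part of ≿ is contained in the asymmetric part of ≿′) with f ∼′ (constant gamble p). -/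
/-!
Each indifference `u ∼ v` is a fair exchange: coherence says that no linear combination of such
differences `u - v` is uniformly negative, so by Hahn-Banach (with the supremum as sublinear
functional) some prevision gives indifferent gambles the same value. Since every gamble is
indifferent to a constant, and since coherence forces the preference to be transitive and to order
constants by size, this prevision represents the preference. Comparing gambles by its values
is coherent on any set of bounded gambles, and the fair price of `f` is its value at `f`.
-/

section Gambles

variable {Ω : Type*}

theorem bounded_iff_exists_abs_le {u : Ω → ℝ} : Bounded u ↔ ∃ C : ℝ, ∀ ω, |u ω| ≤ C := by
  constructor
  · rintro ⟨n, hn⟩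
    exact ⟨n, fun ω => abs_le.2 (hn ω)⟩
  · rintro ⟨C, hC⟩
    obtain ⟨n, hn⟩ := exists_nat_ge C
    exact ⟨n, fun ω => abs_le.1 ((hC ω).trans hn)⟩

theorem bounded_const (a : ℝ) : Bounded (fun _ : Ω => a) :=
  bounded_iff_exists_abs_le.2 ⟨|a|, fun _ => le_rfl⟩

theorem Bounded.bddAbove_range {u : Ω → ℝ} (hu : Bounded u) : BddAbove (Set.range u) := by
  obtain ⟨n, hn⟩ := hu
  exact ⟨n, Set.forall_mem_range.2 fun ω => (hn ω).2⟩

theorem Bounded.add {u v : Ω → ℝ} (hu : Bounded u) (hv : Bounded v) : Bounded (u + v) := by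
  obtain ⟨C, hC⟩ := bounded_iff_exists_abs_le.1 hu
  obtain ⟨D, hD⟩ := bounded_iff_exists_abs_le.1 hv
  exact bounded_iff_exists_abs_le.2
    ⟨C + D, fun ω => (abs_add_le _ _).trans (add_le_add (hC ω) (hD ω))⟩

theorem Bounded.smul {u : Ω → ℝ} (hu : Bounded u) (a : ℝ) : Bounded (a • u) := by
  obtain ⟨C, hC⟩ := bounded_iff_exists_abs_le.1 hu
  refine bounded_iff_exists_abs_le.2 ⟨|a| * C, fun ω => ?_⟩
  rw [Pi.smul_apply, smul_eq_mul, abs_mul]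
  exact mul_le_mul_of_nonneg_left (hC ω) (abs_nonneg a)

/-- The space of bounded gambles, on which the supremum is a sublinear functional. -/
def boundedGambles (Ω : Type*) : Submodule ℝ (Ω → ℝ) where
  carrier := {u | Bounded u}
  zero_mem' := bounded_const 0
  add_mem' := Bounded.add
  smul_mem' a _ hu := hu.smul a

theorem weightedSum_eq_sum_smul {ι : Type*} [Fintype ι] (c : ι → ℝ) (u : ι → Ω → ℝ) :
    (fun ω => ∑ i, c i * u i ω) = ∑ i, c i • u i := by
  ext ω
  simp only [Finset.sum_apply, Pi.smul_apply, smul_eq_mul]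

theorem bounded_weightedSum {ι : Type*} [Fintype ι] (c : ι → ℝ) {u : ι → Ω → ℝ}
    (hu : ∀ i, Bounded (u i)) : Bounded (fun ω => ∑ i, c i * u i ω) := by
  rw [weightedSum_eq_sum_smul]
  exact (boundedGambles Ω).sum_mem fun i _ => (hu i).smul (c i)

end Gambles

section Previsions

variable {Ω : Type*}

/-- A (linear) prevision: a linear functional whose value at a bounded gamble never exceeds an upper
bound of that gamble. It is defined on all gambles to avoid coercions; its values at unbounded
gambles are irrelevant. -/
def IsPrevision (L : (Ω → ℝ) →ₗ[ℝ] ℝ) : Prop :=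
  ∀ u, Bounded u → ∀ a : ℝ, (∀ ω, u ω ≤ a) → L u ≤ a

/-- Preference on the set `Y` of gambles according to the values of the functional `L`. -/
def PrevisionPref (L : (Ω → ℝ) →ₗ[ℝ] ℝ) (Y : Set (Ω → ℝ)) (g h : Ω → ℝ) : Prop :=
  g ∈ Y ∧ h ∈ Y ∧ L h ≤ L g

namespace IsPrevision

variable {L : (Ω → ℝ) →ₗ[ℝ] ℝ}

theorem map_add_const_le (hL : IsPrevision L) {u v : Ω → ℝ} (hu : Bounded u) (hv : Bounded v)
    {a : ℝ} (h : ∀ ω, u ω + a ≤ v ω) : L u + a ≤ L v := by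
  have hsub : L (u - v) ≤ -a :=
    hL _ ((boundedGambles Ω).sub_mem hu hv) _ fun ω => by
      rw [Pi.sub_apply]
      linarith [h ω]
  rw [map_sub] at hsub
  linarith

theorem map_le_map (hL : IsPrevision L) {u v : Ω → ℝ} (hu : Bounded u) (hv : Bounded v)
    (h : ∀ ω, u ω ≤ v ω) : L u ≤ L v := by
  simpa only [add_zero] using hL.map_add_const_le hu hv (a := 0) (by simpa only [add_zero] using h)

theorem map_lt_map_of_uniformlyDominates (hL : IsPrevision L) {u v : Ω → ℝ} (hu : Bounded u)
    (hv : Bounded v) (h : UniformlyDominates v u) : L u < L v := by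
  obtain ⟨a, ha, hdom⟩ := h
  exact (lt_add_of_pos_right _ ha).trans_le (hL.map_add_const_le hu hv hdom)

theorem map_const (hL : IsPrevision L) (a : ℝ) : L (fun _ => a) = a := by
  refine le_antisymm (hL _ (bounded_const a) a fun _ => le_rfl) ?_
  have h := hL.map_add_const_le (u := 0) (bounded_const 0) (bounded_const a) (a := a)
    fun _ => (zero_add a).le
  rwa [map_zero, zero_add] at h

theorem isComparativePrevisionSystem (hL : IsPrevision L) {Y : Set (Ω → ℝ)}
    (hbdd : ∀ g ∈ Y, Bounded g) (hprice : ∀ g ∈ Y, (fun _ => L g) ∈ Y) :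
    IsComparativePrevisionSystem Y (PrevisionPref L Y) := by
  refine ⟨hbdd, fun g h hg hh => ?_, fun g hg => ?_⟩
  · exact (le_total (L h) (L g)).imp (⟨hg, hh, ·⟩) (⟨hh, hg, ·⟩)
  · have hLg : L (fun _ => L g) = L g := hL.map_const _
    exact ⟨L g, hprice g hg, ⟨hg, hprice g hg, hLg.le⟩, ⟨hprice g hg, hg, hLg.ge⟩⟩

theorem deFinettiCoherent (hL : IsPrevision L) {Y : Set (Ω → ℝ)} (hbdd : ∀ g ∈ Y, Bounded g) :
    DeFinettiCoherent Y (PrevisionPref L Y) := by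
  rintro ⟨n, u, v, c, -, hu, hv, hc, huv, hle, hstrict⟩
  have hLsum (w : Fin n → Ω → ℝ) : L (fun ω => ∑ i, c i * w i ω) = ∑ i, c i * L (w i) := by
    simp only [weightedSum_eq_sum_smul, map_sum, map_smul, smul_eq_mul]
  have hubdd := bounded_weightedSum c fun i => hbdd _ (hu i)
  have hvbdd := bounded_weightedSum c fun i => hbdd _ (hv i)
  have hterm : ∀ i ∈ Finset.univ, c i * L (v i) ≤ c i * L (u i) := fun i _ =>
    mul_le_mul_of_nonneg_left (huv i).2.2 (hc i).le
  rcases hstrict with ⟨k, hk⟩ | hdom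
  · have hlt : L (v k) < L (u k) := not_le.1 fun h => hk ⟨hv k, hu k, h⟩
    have hsum_lt := Finset.sum_lt_sum hterm
      ⟨k, Finset.mem_univ k, mul_lt_mul_of_pos_left hlt (hc k)⟩
    rw [← hLsum, ← hLsum] at hsum_lt
    exact hsum_lt.not_ge (hL.map_le_map hubdd hvbdd hle)
  · have hsum_le := Finset.sum_le_sum hterm
    rw [← hLsum, ← hLsum] at hsum_le
    exact hsum_le.not_gt (hL.map_lt_map_of_uniformlyDominates hubdd hvbdd hdom)

end IsPrevision

theorem exists_isPrevision_eq_zero_on [Nonempty Ω] (M : Submodule ℝ (Ω → ℝ))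
    (hM : ∀ m ∈ M, ¬ UniformlyDominates 0 m) :
    ∃ L : (Ω → ℝ) →ₗ[ℝ] ℝ, IsPrevision L ∧ ∀ m ∈ M, Bounded m → L m = 0 := by
  let N : boundedGambles Ω → ℝ := fun u => ⨆ ω, (u : Ω → ℝ) ω
  have le_N (u : boundedGambles Ω) (ω : Ω) : (u : Ω → ℝ) ω ≤ N u :=
    le_ciSup (Bounded.bddAbove_range u.2) ω
  have N_smul (a : ℝ) (ha : 0 < a) (u : boundedGambles Ω) : N (a • u) = a * N u :=
    (Real.mul_iSup_of_nonneg ha.le _).symm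
  have N_add (u v : boundedGambles Ω) : N (u + v) ≤ N u + N v :=
    ciSup_le fun ω => add_le_add (le_N u ω) (le_N v ω)
  have N_nonneg (m : M.submoduleOf (boundedGambles Ω)) : 0 ≤ N m := by
    by_contra! hneg
    refine hM _ m.2 ⟨-N m, neg_pos.2 hneg, fun ω => ?_⟩
    rw [Pi.zero_apply, ← sub_eq_add_neg]
    exact sub_nonpos.2 (le_N m ω)
  obtain ⟨g, hg_zero, hg_le⟩ := exists_extension_of_le_sublinear
    ⟨M.submoduleOf (boundedGambles Ω), 0⟩ N N_smul N_add N_nonneg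
  obtain ⟨L, hL⟩ := LinearMap.exists_extend g
  have hLg (u : boundedGambles Ω) : L u = g u := LinearMap.congr_fun hL u
  refine ⟨L, fun u hu a ha => ?_, fun m hm hbdd => ?_⟩
  · exact (hLg ⟨u, hu⟩).trans_le ((hg_le _).trans (ciSup_le ha))
  · exact (hLg ⟨m, hbdd⟩).trans (hg_zero ⟨⟨m, hbdd⟩, hm⟩)

end Previsions

namespace DeFinettiCoherent

variable {Ω : Type*} {X : Set (Ω → ℝ)} {pref : (Ω → ℝ) → (Ω → ℝ) → Prop}

theorem not_pref_of_uniformlyDominates (hcoh : DeFinettiCoherent X pref) {g h : Ω → ℝ}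
    (hg : g ∈ X) (hh : h ∈ X) (hdom : UniformlyDominates h g) : ¬ pref g h := by
  intro hgh
  obtain ⟨a, ha, hle⟩ := hdom
  refine hcoh ⟨1, fun _ => g, fun _ => h, fun _ => 1, le_rfl, fun _ => hg, fun _ => hh,
    fun _ => one_pos, fun _ => hgh, fun ω => ?_, .inr ⟨a, ha, fun ω => ?_⟩⟩
  · simpa using (le_add_of_nonneg_right ha.le).trans (hle ω)
  · simpa using hle ω

theorem pref_of_le (hcoh : DeFinettiCoherent X pref) {g h : Ω → ℝ} (hg : g ∈ X) (hh : h ∈ X)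
    (htotal : pref g h ∨ pref h g) (hle : ∀ ω, h ω ≤ g ω) : pref g h := by
  by_contra hgh
  refine hcoh ⟨1, fun _ => h, fun _ => g, fun _ => 1, le_rfl, fun _ => hh, fun _ => hg,
    fun _ => one_pos, fun _ => htotal.resolve_left hgh, fun ω => ?_, .inl ⟨0, hgh⟩⟩
  simpa using hle ω

theorem pref_trans (hcoh : DeFinettiCoherent X pref) {g h k : Ω → ℝ} (hg : g ∈ X) (hh : h ∈ X)
    (hk : k ∈ X) (htotal : pref g k ∨ pref k g) (hgh : pref g h) (hhk : pref h k) : pref g k := by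
  by_contra hgk
  -- The exchanges around the cycle `k ≿ g ≿ h ≿ k` cancel, so none of them can be strict.
  refine hcoh ⟨3, ![k, g, h], ![g, h, k], 1, by norm_num, ?_, ?_, fun _ => one_pos, ?_,
    fun ω => ?_, .inl ⟨0, hgk⟩⟩
  · simp [Fin.forall_fin_succ, hg, hh, hk]
  · simp [Fin.forall_fin_succ, hg, hh, hk]
  · simp [Fin.forall_fin_succ, htotal.resolve_left hgk, hgh, hhk]
  · simp only [Fin.sum_univ_three, Pi.one_apply, one_mul, Matrix.cons_val]
    linarith

theorem pref_const_iff (hcoh : DeFinettiCoherent X pref) {a b : ℝ}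
    (ha : (fun _ => a) ∈ X) (hb : (fun _ => b) ∈ X)
    (htotal : pref (fun _ => a) (fun _ => b) ∨ pref (fun _ => b) (fun _ => a)) :
    pref (fun _ => a) (fun _ => b) ↔ b ≤ a := by
  refine ⟨fun hab => ?_, fun hle => hcoh.pref_of_le ha hb htotal fun _ => hle⟩
  by_contra! hlt
  exact hcoh.not_pref_of_uniformlyDominates ha hb
    ⟨b - a, sub_pos.2 hlt, fun _ => (add_sub_cancel a b).le⟩ hab

theorem not_uniformlyDominates_zero_sum [Nonempty Ω] (hcoh : DeFinettiCoherent X pref)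
    (hprefX : ∀ g h, pref g h → g ∈ X ∧ h ∈ X) {ι : Type*} (s : Finset ι) (c : ι → ℝ)
    (u v : ι → Ω → ℝ) (hc : ∀ i ∈ s, 0 < c i) (huv : ∀ i ∈ s, pref (u i) (v i)) :
    ¬ UniformlyDominates 0 (∑ i ∈ s, c i • (u i - v i)) := by
  rintro ⟨ε, hε, hdom⟩
  have hs : s.Nonempty := by
    by_contra! rfl
    obtain ⟨ω⟩ := ‹Nonempty Ω›
    simpa [hε.not_ge] using hdom ω
  let e := s.equivFin.symm
  have hsum (w : ι → Ω → ℝ) (ω : Ω) : ∑ k, c (e k) * w (e k) ω = ∑ i ∈ s, c i * w i ω :=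
    (e.sum_comp fun i => c i * w i ω).trans (s.sum_coe_sort fun i => c i * w i ω)
  have hdom' (ω : Ω) : ∑ i ∈ s, c i * u i ω + ε ≤ ∑ i ∈ s, c i * v i ω := by
    have h := hdom ω
    simp only [Finset.sum_apply, Pi.smul_apply, Pi.sub_apply, smul_eq_mul, mul_sub,
      Finset.sum_sub_distrib, Pi.zero_apply] at h
    linarith
  refine hcoh ⟨s.card, fun k => u (e k), fun k => v (e k), fun k => c (e k), hs.card_pos,
    fun k => (hprefX _ _ (huv _ (e k).2)).1, fun k => (hprefX _ _ (huv _ (e k).2)).2,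
    fun k => hc _ (e k).2, fun k => huv _ (e k).2, fun ω => ?_, .inr ⟨ε, hε, fun ω => ?_⟩⟩
  · simpa only [hsum u, hsum v] using (le_add_of_nonneg_right hε.le).trans (hdom' ω)
  · simpa only [hsum u, hsum v] using hdom' ω

theorem not_uniformlyDominates_zero_of_mem_span [Nonempty Ω] (hcoh : DeFinettiCoherent X pref)
    (hprefX : ∀ g h, pref g h → g ∈ X ∧ h ∈ X) {m : Ω → ℝ}
    (hm : m ∈ Submodule.span ℝ {w | ∃ u v, pref u v ∧ pref v u ∧ u - v = w}) :
    ¬ UniformlyDominates 0 m := by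
  obtain ⟨a, ha_supp, rfl⟩ := Submodule.mem_span_set.1 hm
  -- Indifference is symmetric, so a negative coefficient is absorbed by reversing the exchange.
  have horient : ∀ w ∈ a.support, ∃ u v, pref u v ∧ |a w| • (u - v) = a w • w := by
    intro w hw
    obtain ⟨u, v, huv, hvu, rfl⟩ := ha_supp hw
    rcases abs_choice (a (u - v)) with h | h
    · exact ⟨u, v, huv, by rw [h]⟩
    · exact ⟨v, u, hvu, by rw [h, neg_smul, ← smul_neg, neg_sub]⟩
  choose! u v huv hterm using horient
  rw [Finsupp.sum, ← Finset.sum_congr rfl hterm]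
  exact hcoh.not_uniformlyDominates_zero_sum hprefX a.support _ u v
    (fun w hw => abs_pos.2 (Finsupp.mem_support_iff.1 hw)) huv

theorem exists_isPrevision_eq_of_indifferent [Nonempty Ω] (hcoh : DeFinettiCoherent X pref)
    (hprefX : ∀ g h, pref g h → g ∈ X ∧ h ∈ X) (hbdd : ∀ g ∈ X, Bounded g) :
    ∃ L : (Ω → ℝ) →ₗ[ℝ] ℝ, IsPrevision L ∧ ∀ u v, pref u v → pref v u → L u = L v := by
  obtain ⟨L, hL, hzero⟩ := exists_isPrevision_eq_zero_on _
    fun _ => hcoh.not_uniformlyDominates_zero_of_mem_span hprefX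
  refine ⟨L, hL, fun u v huv hvu => ?_⟩
  obtain ⟨hu, hv⟩ := hprefX u v huv
  have hdiff : L (u - v) = 0 := hzero _ (Submodule.subset_span ⟨u, v, huv, hvu, rfl⟩)
    ((boundedGambles Ω).sub_mem (hbdd u hu) (hbdd v hv))
  rwa [map_sub, sub_eq_zero] at hdiff

theorem exists_isPrevision_representing [Nonempty Ω] (hcoh : DeFinettiCoherent X pref)
    (hprefX : ∀ g h, pref g h → g ∈ X ∧ h ∈ X) (hCPS : IsComparativePrevisionSystem X pref) :
    ∃ L : (Ω → ℝ) →ₗ[ℝ] ℝ, IsPrevision L ∧ (∀ g ∈ X, (fun _ => L g) ∈ X) ∧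
      ∀ g ∈ X, ∀ h ∈ X, (pref g h ↔ L h ≤ L g) := by
  obtain ⟨hbdd, htotal, hfair⟩ := hCPS
  obtain ⟨L, hL, hind⟩ := hcoh.exists_isPrevision_eq_of_indifferent hprefX hbdd
  have hprice : ∀ g ∈ X, (fun _ => L g) ∈ X ∧ pref g (fun _ => L g) ∧ pref (fun _ => L g) g := by
    intro g hg
    obtain ⟨p, hp, hgp, hpg⟩ := hfair g hg
    obtain rfl : L g = p := (hind _ _ hgp hpg).trans (hL.map_const p)
    exact ⟨hp, hgp, hpg⟩
  have htrans {u v w : Ω → ℝ} (huv : pref u v) (hvw : pref v w) : pref u w := by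
    obtain ⟨hu, hv⟩ := hprefX u v huv
    have hw := (hprefX v w hvw).2
    exact hcoh.pref_trans hu hv hw (htotal u w hu hw) huv hvw
  refine ⟨L, hL, fun g hg => (hprice g hg).1, fun g hg h hh => ?_⟩
  obtain ⟨hpg, hg_to, hg_from⟩ := hprice g hg
  obtain ⟨hph, hh_to, hh_from⟩ := hprice h hh
  rw [← hcoh.pref_const_iff hpg hph (htotal _ _ hpg hph)]
  exact ⟨fun hgh => htrans hg_from (htrans hgh hh_to),
    fun hprices => htrans hg_to (htrans hprices hh_from)⟩

end DeFinettiCoherent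

/-- Fundamental theorem of prevision (one-off extension): a de Finetti coherent comparative
prevision system can be extended by any bounded gamble `f` together with a fair price for
it. -/
theorem deFinetti_one_off_extension {Ω : Type*} [Nonempty Ω]
    (X : Set (Ω → ℝ))
    (pref : (Ω → ℝ) → (Ω → ℝ) → Prop)
    (hprefX : ∀ f g, pref f g → f ∈ X ∧ g ∈ X)
    (hCPS : IsComparativePrevisionSystem X pref)
    (hcoh : DeFinettiCoherent X pref)
    (f : Ω → ℝ) (hf : Bounded f) :
    ∃ (p : ℝ) (pref' : (Ω → ℝ) → (Ω → ℝ) → Prop),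
      (∀ g h, pref' g h →
        g ∈ X ∪ {f, fun _ => p} ∧ h ∈ X ∪ {f, fun _ => p}) ∧
      IsComparativePrevisionSystem (X ∪ {f, fun _ => p}) pref' ∧
      DeFinettiCoherent (X ∪ {f, fun _ => p}) pref' ∧
      (∀ g h, pref g h → pref' g h) ∧
      (∀ g h, pref g h → ¬ pref h g → ¬ pref' h g) ∧
      pref' f (fun _ => p) ∧ pref' (fun _ => p) f := by
  obtain ⟨L, hL, hprice, hrep⟩ := hcoh.exists_isPrevision_representing hprefX hCPS
  let Y := X ∪ {f, fun _ => L f}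
  have hfY : f ∈ Y := by simp [Y]
  have hpY : (fun _ => L f) ∈ Y := by simp [Y]
  have hbdd : ∀ g ∈ Y, Bounded g := by
    rintro g (hg | rfl | rfl)
    exacts [hCPS.1 g hg, hf, bounded_const _]
  have hpriceY : ∀ g ∈ Y, (fun _ => L g) ∈ Y := by
    rintro g (hg | rfl | rfl)
    · exact .inl (hprice g hg)
    · exact hpY
    · rwa [hL.map_const]
  refine ⟨L f, PrevisionPref L Y, fun g h hgh => ⟨hgh.1, hgh.2.1⟩,
    hL.isComparativePrevisionSystem hbdd hpriceY, hL.deFinettiCoherent hbdd,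
    fun g h hgh => ?_, fun g h hgh hhg hhg' => ?_,
    ⟨hfY, hpY, (hL.map_const _).le⟩, ⟨hpY, hfY, (hL.map_const _).ge⟩⟩
  · obtain ⟨hg, hh⟩ := hprefX g h hgh
    exact ⟨.inl hg, .inl hh, (hrep g hg h hh).1 hgh⟩
  · obtain ⟨hg, hh⟩ := hprefX g h hgh
    exact hhg ((hrep h hh g hg).2 hhg'.2.2)
end
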